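/- Let f be a binary quartic such that its Hessian determinant H(f) satisfies Δ(H(f)) ≠ 0. Let ν_{ij} be scalars with z_1^i z_2^j − ν_{ij}·H(H(f)) ∈ J(H(f)) for i+j = 4, and let A_{H(f)} := Σ_{i+j=4} (24/(i!·j!))·ν_{ij}·z_1^i z_2^j be the associated quartic of H(f). Then Δ(H(f))·A_{H(f)}(z_1,z_2) = 2⁹·3⁶·I2(f)²·I3(f)·f(−z_2,z_1) − 2⁶·3⁶·I3(f)²·H(f)(−z_2,z_1) as polynomials in ℂ[z_1,z_2]. -/

import Mathlib

/-! Let `g` be a binary quartic with `Δ(g) ≠ 0`. The relation `z^α - ν_α H(g) ∈ J(g)` is solved by a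
linear functional on polynomials which kills `J(g)` and takes the value `Δ(g)` on `H(g)`: it sends
`z^α` to `Δ(g) ν_α`. Such a functional is written down explicitly. It is the apolar pairing with the
covariant

  `W = (1/3456) I2(g) H(g)(-z_2, z_1) - (1/16) I3(g) g(-z_2, z_1)`,

whose rational constants are forced by the case `g = z_1⁴ + 6c z_1²z_2² + z_2⁴`. The vanishing on
`J(g)` (`apolar_mul_pderiv_zero`, `apolar_mul_pderiv_one`) only involves the linear part of the
cofactors, and the value on `H(g)` is a polynomial identity (`apolar_hess`). Hence
`Δ(g) A_g = W` (`disc_mul_assocQuartic`).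

Taking `g = H(f)`, the theorem becomes the classical fact that `I2(g) H(g)` and `I3(g) g` are
combinations of `f` and `H(f)` with coefficients in the invariants of `f`, an identity between the
five coefficients of two quartics.
-/

open MvPolynomial

noncomputable section

/-- Binary forms: polynomials in two variables over ℂ. -/
abbrev P2 := MvPolynomial (Fin 2) ℂ

/-- The coefficient of `z_1^i z_2^j` in a binary form. -/
def cf (f : P2) (i j : ℕ) : ℂ :=
  coeff (Finsupp.single 0 i + Finsupp.single 1 j) f

/-- The invariant `I2(f) = ae − 4bd + 3c²` of a binary quartic
`f = a·z_1⁴ + 4b·z_1³z_2 + 6c·z_1²z_2² + 4d·z_1z_2³ + e·z_2⁴`. -/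
def I2 (f : P2) : ℂ :=
  cf f 4 0 * cf f 0 4 - 4 * (cf f 3 1 / 4) * (cf f 1 3 / 4) + 3 * (cf f 2 2 / 6) ^ 2

/-- The invariant `I3(f) = ace + 2bcd − ad² − b²e − c³` (the catalecticant). -/
def I3 (f : P2) : ℂ :=
  cf f 4 0 * (cf f 2 2 / 6) * cf f 0 4 +
    2 * (cf f 3 1 / 4) * (cf f 2 2 / 6) * (cf f 1 3 / 4) -
    cf f 4 0 * (cf f 1 3 / 4) ^ 2 - (cf f 3 1 / 4) ^ 2 * cf f 0 4 - (cf f 2 2 / 6) ^ 3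

/-- The discriminant `Δ(f) = I2(f)³ − 27·I3(f)²` of a binary quartic. -/
def disc (f : P2) : ℂ := I2 f ^ 3 - 27 * I3 f ^ 2

/-- The Hessian determinant `H(f) = f_{11}f_{22} − f_{12}²`. -/
def hess (f : P2) : P2 :=
  pderiv 0 (pderiv 0 f) * pderiv 1 (pderiv 1 f) - pderiv 0 (pderiv 1 f) ^ 2

/-- The Jacobian ideal `J(f) = (f_1, f_2)`. -/
def jac (f : P2) : Ideal P2 := Ideal.span {pderiv 0 f, pderiv 1 f}

/-- The binary quartic `a·z_1⁴ + 4b·z_1³z_2 + 6c·z_1²z_2² + 4d·z_1z_2³ + e·z_2⁴`. -/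
def quartic (a b c d e : ℂ) : P2 :=
  MvPolynomial.C a * X 0 ^ 4 + MvPolynomial.C (4 * b) * X 0 ^ 3 * X 1 +
    MvPolynomial.C (6 * c) * X 0 ^ 2 * X 1 ^ 2 + MvPolynomial.C (4 * d) * X 0 * X 1 ^ 3 +
    MvPolynomial.C e * X 1 ^ 4

/-- The associated quartic `A_f := Σ_{i+j=4} (24/(i!·j!))·μ_{ij}·z_1^i z_2^j`
built from scalars `μ_{ij}`. -/
def assocQuartic (μ : ℕ → ℕ → ℂ) : P2 :=
  ∑ i ∈ Finset.range 5,
    MvPolynomial.C ((24 : ℂ) / ((i.factorial : ℂ) * ((4 - i).factorial : ℂ))) *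
      MvPolynomial.C (μ i (4 - i)) * X 0 ^ i * X 1 ^ (4 - i)

/-- The substitution `(z_1, z_2) ↦ (−z_2, z_1)`, i.e. `g ↦ g(−z_2, z_1)`. -/
def twist (g : P2) : P2 := aeval ![-(X 1 : P2), X 0] g

lemma cf_add (p q : P2) (i j : ℕ) : cf (p + q) i j = cf p i j + cf q i j := by simp [cf]

lemma cf_sub (p q : P2) (i j : ℕ) : cf (p - q) i j = cf p i j - cf q i j := by simp [cf]

lemma cf_C_mul (r : ℂ) (p : P2) (i j : ℕ) : cf (C r * p) i j = r * cf p i j := by simp [cf]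

lemma cf_one (i j : ℕ) : cf 1 i j = if i = 0 ∧ j = 0 then 1 else 0 := by
  rw [cf, coeff_one]
  congr 1
  simp [Finsupp.ext_iff, Fin.forall_fin_two, eq_comm]

lemma cf_mul_X0_succ (p : P2) (i j : ℕ) : cf (p * X 0) (i + 1) j = cf p i j := by
  rw [cf, Finsupp.single_add, add_right_comm, coeff_mul_X, cf]

lemma cf_mul_X1_succ (p : P2) (i j : ℕ) : cf (p * X 1) i (j + 1) = cf p i j := by
  rw [cf, Finsupp.single_add, ← add_assoc, coeff_mul_X, cf]

lemma cf_mul_X0_zero (p : P2) (j : ℕ) : cf (p * X 0) 0 j = 0 := by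
  rw [cf, coeff_mul_X']; simp

lemma cf_mul_X1_zero (p : P2) (i : ℕ) : cf (p * X 1) i 0 = 0 := by
  rw [cf, coeff_mul_X']; simp

/-- The coefficients of `p·z_1^m·z_2^n` are those of `p`, shifted by `(m, n)`. -/
lemma cf_mul_monomial (p : P2) (m n i j : ℕ) :
    cf (p * (X 0 ^ m * X 1 ^ n)) i j = if m ≤ i ∧ n ≤ j then cf p (i - m) (j - n) else 0 := by
  rw [← mul_assoc]
  induction n generalizing j with
  | zero =>
    induction m generalizing i with
    | zero => simp
    | succ m ih =>
      rw [pow_zero, mul_one] at *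
      rw [pow_succ, ← mul_assoc]
      cases i with
      | zero => simp [cf_mul_X0_zero]
      | succ i => rw [cf_mul_X0_succ]; simpa using ih i
  | succ n ih =>
    rw [pow_succ, ← mul_assoc]
    cases j with
    | zero => simp [cf_mul_X1_zero]
    | succ j => rw [cf_mul_X1_succ, ih]; simp

lemma cf_monomial (m n i j : ℕ) :
    cf (X 0 ^ m * X 1 ^ n) i j = if i = m ∧ j = n then 1 else 0 := by
  have h := cf_mul_monomial 1 m n i j
  simp only [one_mul, cf_one, ← ite_and] at h
  rw [h]
  congr 1
  simp only [eq_iff_iff]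
  omega

lemma quartic_eq (a b c d e : ℂ) : quartic a b c d e =
    C a * (X 0 ^ 4 * X 1 ^ 0) + C (4 * b) * (X 0 ^ 3 * X 1 ^ 1) +
      C (6 * c) * (X 0 ^ 2 * X 1 ^ 2) + C (4 * d) * (X 0 ^ 1 * X 1 ^ 3) +
      C e * (X 0 ^ 0 * X 1 ^ 4) := by
  rw [quartic]; ring

lemma I2_quartic (a b c d e : ℂ) :
    I2 (quartic a b c d e) = a * e - 4 * b * d + 3 * c ^ 2 := by
  simp only [I2, quartic_eq, cf_add, cf_C_mul, cf_monomial]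
  norm_num

lemma I3_quartic (a b c d e : ℂ) : I3 (quartic a b c d e) =
    a * c * e + 2 * b * c * d - a * d ^ 2 - b ^ 2 * e - c ^ 3 := by
  simp only [I3, quartic_eq, cf_add, cf_C_mul, cf_monomial]
  norm_num

lemma pderiv_ofNat (i : Fin 2) (n : ℕ) [n.AtLeastTwo] : pderiv i (ofNat(n) : P2) = 0 :=
  Derivation.map_natCast (pderiv i) n

lemma pderiv_zero_quartic (a b c d e : ℂ) : pderiv 0 (quartic a b c d e) =
    C (4 * a) * (X 0 ^ 3 * X 1 ^ 0) + C (12 * b) * (X 0 ^ 2 * X 1 ^ 1) +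
      C (12 * c) * (X 0 ^ 1 * X 1 ^ 2) + C (4 * d) * (X 0 ^ 0 * X 1 ^ 3) := by
  simp [quartic, Derivation.leibniz, Derivation.leibniz_pow, pderiv_X, pderiv_ofNat, map_ofNat]
  ring

lemma pderiv_one_quartic (a b c d e : ℂ) : pderiv 1 (quartic a b c d e) =
    C (4 * b) * (X 0 ^ 3 * X 1 ^ 0) + C (12 * c) * (X 0 ^ 2 * X 1 ^ 1) +
      C (12 * d) * (X 0 ^ 1 * X 1 ^ 2) + C (4 * e) * (X 0 ^ 0 * X 1 ^ 3) := by
  simp [quartic, Derivation.leibniz, Derivation.leibniz_pow, pderiv_X, pderiv_ofNat, map_ofNat]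
  ring

lemma hess_quartic (a b c d e : ℂ) : hess (quartic a b c d e) =
    quartic (144 * (a * c - b ^ 2)) (72 * (a * d - b * c)) (24 * (a * e + 2 * b * d - 3 * c ^ 2))
      (72 * (b * e - c * d)) (144 * (c * e - d ^ 2)) := by
  rw [hess, pderiv_zero_quartic, pderiv_one_quartic]
  simp [quartic, Derivation.leibniz, Derivation.leibniz_pow, pderiv_X, pderiv_ofNat, map_ofNat]
  ring

lemma twist_quartic (a b c d e : ℂ) :
    twist (quartic a b c d e) = quartic e (-d) c (-b) a := by
  simp [twist, quartic, algebraMap_eq]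
  ring

lemma quartic_congr {a b c d e a' b' c' d' e' : ℂ} (ha : a = a') (hb : b = b') (hc : c = c')
    (hd : d = d') (he : e = e') : quartic a b c d e = quartic a' b' c' d' e' := by
  rw [ha, hb, hc, hd, he]

lemma C_mul_quartic (k a b c d e : ℂ) :
    C k * quartic a b c d e = quartic (k * a) (k * b) (k * c) (k * d) (k * e) := by
  simp only [quartic, map_mul]
  ring

lemma quartic_sub (a b c d e a' b' c' d' e' : ℂ) :
    quartic a b c d e - quartic a' b' c' d' e' =
      quartic (a - a') (b - b') (c - c') (d - d') (e - e') := by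
  simp only [quartic, map_mul, map_sub]
  ring

lemma assocQuartic_eq (ν : ℕ → ℕ → ℂ) :
    assocQuartic ν = quartic (ν 4 0) (ν 3 1) (ν 2 2) (ν 1 3) (ν 0 4) := by
  simp only [assocQuartic, quartic, Finset.sum_range_succ, Finset.sum_range_zero, ← C_mul]
  norm_num [Nat.factorial]
  ring

/-- The normalized coefficient of `z_1^i z_2^(4-i)` in the covariant
`(1/3456) I2(g) H(g)(-z_2, z_1) - (1/16) I3(g) g(-z_2, z_1)` of `g = quartic a b c d e`, that is, its
coefficient divided by `24/(i!(4-i)!)`; it is `0` for `i > 4`. -/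
def wt (a b c d e : ℂ) : ℕ → ℂ
  | 4 => (a * e - 4 * b * d + 3 * c ^ 2) * (c * e - d ^ 2) / 24 -
      (a * c * e + 2 * b * c * d - a * d ^ 2 - b ^ 2 * e - c ^ 3) * e / 16
  | 3 => -(a * e - 4 * b * d + 3 * c ^ 2) * (b * e - c * d) / 48 +
      (a * c * e + 2 * b * c * d - a * d ^ 2 - b ^ 2 * e - c ^ 3) * d / 16
  | 2 => (a * e - 4 * b * d + 3 * c ^ 2) * (a * e + 2 * b * d - 3 * c ^ 2) / 144 -
      (a * c * e + 2 * b * c * d - a * d ^ 2 - b ^ 2 * e - c ^ 3) * c / 16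
  | 1 => -(a * e - 4 * b * d + 3 * c ^ 2) * (a * d - b * c) / 48 +
      (a * c * e + 2 * b * c * d - a * d ^ 2 - b ^ 2 * e - c ^ 3) * b / 16
  | 0 => (a * e - 4 * b * d + 3 * c ^ 2) * (a * c - b ^ 2) / 24 -
      (a * c * e + 2 * b * c * d - a * d ^ 2 - b ^ 2 * e - c ^ 3) * a / 16
  | _ => 0

/-- The functional `z_1^i z_2^j ↦ w i` for `i + j = 4`, zero on monomials of any other degree. -/
def apolar (w : ℕ → ℂ) (p : P2) : ℂ :=
  w 4 * cf p 4 0 + w 3 * cf p 3 1 + w 2 * cf p 2 2 + w 1 * cf p 1 3 + w 0 * cf p 0 4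

lemma apolar_add (w : ℕ → ℂ) (p q : P2) : apolar w (p + q) = apolar w p + apolar w q := by
  simp only [apolar, cf_add]; ring

lemma apolar_sub (w : ℕ → ℂ) (p q : P2) : apolar w (p - q) = apolar w p - apolar w q := by
  simp only [apolar, cf_sub]; ring

lemma apolar_C_mul (w : ℕ → ℂ) (r : ℂ) (p : P2) : apolar w (C r * p) = r * apolar w p := by
  simp only [apolar, cf_C_mul]; ring

lemma apolar_monomial (w : ℕ → ℂ) (i j : ℕ) (h : i + j = 4) :
    apolar w (X 0 ^ i * X 1 ^ j) = w i := by
  obtain rfl : j = 4 - i := by omega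
  have hi : i ≤ 4 := by omega
  simp only [apolar, cf_monomial]
  interval_cases i <;> simp

/-- The degree-four part of `p` times a cubic depends only on the linear part of `p`. -/
lemma apolar_mul_cubic (w : ℕ → ℂ) (p : P2) (a b c d : ℂ) :
    apolar w (p * (C a * (X 0 ^ 3 * X 1 ^ 0) + C b * (X 0 ^ 2 * X 1 ^ 1) +
      C c * (X 0 ^ 1 * X 1 ^ 2) + C d * (X 0 ^ 0 * X 1 ^ 3))) =
    (a * w 4 + b * w 3 + c * w 2 + d * w 1) * cf p 1 0 +
      (a * w 3 + b * w 2 + c * w 1 + d * w 0) * cf p 0 1 := by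
  have hC (r : ℂ) (q : P2) : apolar w (p * (C r * q)) = r * apolar w (p * q) := by
    rw [mul_left_comm, apolar_C_mul]
  simp only [mul_add, apolar_add, hC]
  simp only [apolar, cf_mul_monomial]
  norm_num
  ring

lemma apolar_mul_pderiv_zero (a b c d e : ℂ) (p : P2) :
    apolar (wt a b c d e) (p * pderiv 0 (quartic a b c d e)) = 0 := by
  rw [pderiv_zero_quartic, apolar_mul_cubic]
  simp only [wt]
  ring

lemma apolar_mul_pderiv_one (a b c d e : ℂ) (p : P2) :
    apolar (wt a b c d e) (p * pderiv 1 (quartic a b c d e)) = 0 := by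
  rw [pderiv_one_quartic, apolar_mul_cubic]
  simp only [wt]
  ring

lemma apolar_jac (a b c d e : ℂ) (p : P2) (hp : p ∈ jac (quartic a b c d e)) :
    apolar (wt a b c d e) p = 0 := by
  obtain ⟨u, v, rfl⟩ := Ideal.mem_span_pair.mp hp
  rw [apolar_add, apolar_mul_pderiv_zero, apolar_mul_pderiv_one, add_zero]

lemma apolar_hess (a b c d e : ℂ) :
    apolar (wt a b c d e) (hess (quartic a b c d e)) = disc (quartic a b c d e) := by
  rw [hess_quartic, quartic_eq, disc, I2_quartic, I3_quartic]
  simp only [apolar_add, apolar_C_mul]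
  rw [apolar_monomial _ 4 0 rfl, apolar_monomial _ 3 1 rfl, apolar_monomial _ 2 2 rfl,
    apolar_monomial _ 1 3 rfl, apolar_monomial _ 0 4 rfl]
  simp only [wt]
  ring

/-- The associated quartic, multiplied by the discriminant, as an explicit covariant: applying the
functional `apolar` to the relation defining `ν i j` gives `Δ(g) ν i j = wt a b c d e i`. -/
lemma disc_mul_assocQuartic (a b c d e : ℂ) (g : P2) (hg : g = quartic a b c d e)
    (ν : ℕ → ℕ → ℂ)
    (hν : ∀ i j : ℕ, i + j = 4 → X 0 ^ i * X 1 ^ j - C (ν i j) * hess g ∈ jac g) :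
    C (disc g) * assocQuartic ν =
      twist (C (I2 g / 3456) * hess g - C (I3 g / 16) * g) := by
  subst hg
  have key (i j : ℕ) (h : i + j = 4) :
      disc (quartic a b c d e) * ν i j = wt a b c d e i := by
    have h0 := apolar_jac a b c d e _ (hν i j h)
    rw [apolar_sub, apolar_C_mul, apolar_hess, apolar_monomial _ i j h] at h0
    linear_combination -h0
  rw [assocQuartic_eq, C_mul_quartic, key 4 0 rfl, key 3 1 rfl, key 2 2 rfl, key 1 3 rfl,
    key 0 4 rfl, I2_quartic, I3_quartic, hess_quartic, C_mul_quartic, C_mul_quartic, quartic_sub,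
    twist_quartic]
  simp only [wt]
  apply quartic_congr <;> ring

/-- The classical expression of the covariants `I2(H) H(H)` and `I3(H) H` of `H = H(f)` through
`f` and `H(f)`, in the combination that gives the associated quartic. -/
lemma covariant_hess (a b c d e : ℂ) (f : P2) (hf : f = quartic a b c d e) :
    C (I2 (hess f) / 3456) * hess (hess f) - C (I3 (hess f) / 16) * hess f =
      C (2 ^ 9 * 3 ^ 6 * I2 f ^ 2 * I3 f) * f - C (2 ^ 6 * 3 ^ 6 * I3 f ^ 2) * hess f := by
  subst hf
  simp only [hess_quartic, I2_quartic, I3_quartic, C_mul_quartic, quartic_sub]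
  apply quartic_congr <;> ring

/-- the associated quartic of the Hessian:
`Δ(H(f))·A_{H(f)}(z_1,z_2) = 2⁹·3⁶·I2(f)²·I3(f)·f(−z_2,z_1) − 2⁶·3⁶·I3(f)²·H(f)(−z_2,z_1)`. -/
theorem assoc_quartic_of_hessian (a b c d e : ℂ) (f : P2)
    (hf : f = quartic a b c d e) (hΔ : disc (hess f) ≠ 0)
    (ν : ℕ → ℕ → ℂ)
    (hν : ∀ i j : ℕ, i + j = 4 →
      X 0 ^ i * X 1 ^ j - MvPolynomial.C (ν i j) * hess (hess f) ∈ jac (hess f)) :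
    MvPolynomial.C (disc (hess f)) * assocQuartic ν =
      MvPolynomial.C (2 ^ 9 * 3 ^ 6 * I2 f ^ 2 * I3 f) * twist f -
        MvPolynomial.C (2 ^ 6 * 3 ^ 6 * I3 f ^ 2) * twist (hess f) := by
  have hH := hess_quartic a b c d e
  rw [← hf] at hH
  rw [disc_mul_assocQuartic _ _ _ _ _ _ hH ν hν,
    covariant_hess a b c d e f hf]
  simp [twist, algebraMap_eq]

end
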